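/- arXiv:1712.03205 — 9 statements merged into one kernel-verified Lean document; each statement's English description precedes it below -/
import Mathlib

section
/- Let (V, d_V) be a cochain complex of ℂ-vector spaces admitting a Hodge type decomposition (W, 𝓜), and regard W as a cochain complex with zero differential. Then there exist cochain maps f : V → W and g : W → V and a homotopy h between g ∘ f and id_V such that f ∘ g = id_W and the side conditions f ∘ h = 0, h ∘ g = 0 and h ∘ h = 0 hold. (Moreover one may take g to be the inclusion of W into V and f the projection onto W along d_V(𝓜) ⊕ 𝓜.) -/
/-!
STATEMENT 0: Given a cochain complex `(V, d)` of `ℂ`-vector spaces with a Hodge type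
decomposition `(W, 𝓜)`, there exist cochain maps `f : V → W`, `g : W → V` (with `W` viewed
as a complex with zero differential) and a homotopy `h` between `g ∘ f` and `id_V` such
that `f ∘ g = id_W`, `f ∘ h = 0`, `h ∘ g = 0`, `h ∘ h = 0`; moreover one may take `g` to be
the inclusion of `W` and `f` the projection onto `W` along `d(𝓜) ⊕ 𝓜`.
-/

theorem aux_compl {E : Type} [AddCommGroup E] [Module ℂ E] (A B C : Submodule ℂ E)
    (h : DirectSum.IsInternal ![A, B, C]) :
    IsCompl A (B ⊔ C) ∧ IsCompl B (A ⊔ C) := by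
  have hi := h.submodule_iSupIndep
  have ht := h.submodule_iSup_eq_top
  have ht' : A ⊔ (B ⊔ C) = ⊤ := by
    rw [eq_top_iff, ← ht]
    refine iSup_le fun k => ?_
    fin_cases k
    · exact le_sup_left
    · exact le_sup_left.trans le_sup_right
    · exact le_sup_right.trans le_sup_right
  refine ⟨⟨?_, codisjoint_iff.2 ht'⟩, ⟨?_, codisjoint_iff.2 ?_⟩⟩
  · refine (hi 0).mono_right (sup_le ?_ ?_)
    · exact le_iSup₂_of_le (1 : Fin 3) (by decide) le_rfl
    · exact le_iSup₂_of_le (2 : Fin 3) (by decide) le_rfl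
  · refine (hi 1).mono_right (sup_le ?_ ?_)
    · exact le_iSup₂_of_le (0 : Fin 3) (by decide) le_rfl
    · exact le_iSup₂_of_le (2 : Fin 3) (by decide) le_rfl
  · rw [← ht']; exact sup_left_comm _ _ _

theorem stmt_0
    (V : ℤ → Type) [∀ i, AddCommGroup (V i)] [∀ i, Module ℂ (V i)]
    (d : ∀ i, V i →ₗ[ℂ] V (i + 1))
    (hd : ∀ i, (d (i + 1)).comp (d i) = 0)
    (W M : ∀ i, Submodule ℂ (V i))
    -- every element of `W` is closed
    (hWclosed : ∀ i, W i ≤ LinearMap.ker (d i))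
    -- internal direct sum `V = W ⊕ d 𝓜 ⊕ 𝓜` (in every degree)
    (hdirect : ∀ i, DirectSum.IsInternal ![W (i + 1), (M i).map (d i), M (i + 1)])
    -- `W` maps isomorphically onto cohomology
    (hWinj : ∀ i, W (i + 1) ⊓ LinearMap.range (d i) = ⊥)
    (hWsurj : ∀ i, LinearMap.ker (d (i + 1)) ≤ W (i + 1) ⊔ LinearMap.range (d i))
    -- `𝓜` contains no exact elements except `0`
    (hM : ∀ i, M (i + 1) ⊓ LinearMap.range (d i) = ⊥) :
    ∃ (f : ∀ i, V i →ₗ[ℂ] W i) (g : ∀ i, W i →ₗ[ℂ] V i)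
      (h : ∀ i, V (i + 1) →ₗ[ℂ] V i),
      -- `f` is a cochain map (to the complex `W` with zero differential)
      (∀ i, (f (i + 1)).comp (d i) = 0) ∧
      -- `g` is a cochain map
      (∀ i, (d i).comp (g i) = 0) ∧
      -- `f ∘ g = id_W`
      (∀ i, (f i).comp (g i) = LinearMap.id) ∧
      -- `h` is a homotopy between `g ∘ f` and `id_V`
      (∀ i, (g (i + 1)).comp (f (i + 1)) - LinearMap.id
          = (d i).comp (h i) + (h (i + 1)).comp (d (i + 1))) ∧
      -- side conditions
      (∀ i, (f i).comp (h i) = 0) ∧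
      (∀ i, (h i).comp (g (i + 1)) = 0) ∧
      (∀ i, (h i).comp (h (i + 1)) = 0) ∧
      -- moreover, `g` may be taken to be the inclusion of `W` into `V`
      (∀ i, g i = (W i).subtype) ∧
      -- and `f` the projection onto `W` along `d(𝓜) ⊕ 𝓜`
      (∀ i, ∀ x ∈ M i, f i x = 0) ∧
      (∀ i, ∀ x ∈ M i, f (i + 1) (d i x) = 0) := by
  have hdd : ∀ i x, d (i + 1) (d i x) = 0 := fun i x => LinearMap.congr_fun (hd i) x
  have hdec : ∀ i (v : V (i + 1)), ∃ w ∈ W (i + 1), ∃ m ∈ M i, ∃ m' ∈ M (i + 1),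
      v = w + (d i m + m') := by
    intro i v
    have hv : v ∈ W (i + 1) ⊔ ((M i).map (d i) ⊔ M (i + 1)) := by
      rw [(aux_compl _ _ _ (hdirect i)).1.sup_eq_top]; trivial
    obtain ⟨w, hw, y, hy, rfl⟩ := Submodule.mem_sup.1 hv
    obtain ⟨z, hz, m', hm', rfl⟩ := Submodule.mem_sup.1 hy
    obtain ⟨m, hm, rfl⟩ := hz
    exact ⟨w, hw, m, hm, m', hm', rfl⟩
  have hdm : ∀ i (v : V i), ∃ m ∈ M i, d i v = d i m := by
    intro i v
    obtain ⟨j, rfl⟩ : ∃ j, i = j + 1 := ⟨i - 1, by ring⟩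
    obtain ⟨w, hw, m, hm, m', hm', rfl⟩ := hdec j v
    refine ⟨m', hm', ?_⟩
    have : d (j + 1) w = 0 := hWclosed _ hw
    simp [this, hdd]
  have hinj : ∀ i, ∀ x ∈ M i, d i x = 0 → x = 0 := by
    intro i x hx h0
    obtain ⟨j, rfl⟩ : ∃ j, i = j + 1 := ⟨i - 1, by ring⟩
    obtain ⟨w, hw, y, ⟨v, rfl⟩, e⟩ := Submodule.mem_sup.1 (hWsurj j h0)
    obtain ⟨m, hm, e2⟩ := hdm j v
    obtain ⟨hc1, -⟩ := aux_compl _ _ _ (hdirect j)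
    have hw0 : w = 0 := by
      refine Submodule.disjoint_def.1 hc1.disjoint w hw ?_
      have : w = x - d j m := by rw [← e, e2]; simp
      rw [this]
      exact Submodule.sub_mem _ (Submodule.mem_sup_right hx)
        (Submodule.mem_sup_left ⟨m, hm, rfl⟩)
    have : x ∈ M (j + 1) ⊓ LinearMap.range (d j) := ⟨hx, v, by rw [← e, hw0]; simp⟩
    rw [hM] at this
    exact this
  have hf : ∀ i, ∃ f : V i →ₗ[ℂ] W i, (∀ w : W i, f w = w) ∧ (∀ x ∈ M i, f x = 0) ∧
      (∀ j (e : j + 1 = i), ∀ x ∈ M j, f (e ▸ d j x) = 0) := by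
    intro i
    obtain ⟨j, rfl⟩ : ∃ j, i = j + 1 := ⟨i - 1, by ring⟩
    obtain ⟨hc1, -⟩ := aux_compl _ _ _ (hdirect j)
    refine ⟨Submodule.projectionOnto _ _ hc1,
      fun w => Submodule.projectionOnto_apply_left hc1 w, ?_, ?_⟩
    · intro x hx
      exact (Submodule.projectionOnto_apply_eq_zero_iff hc1).2 (Submodule.mem_sup_right hx)
    · intro k e x hx
      obtain rfl : k = j := by omega
      exact (Submodule.projectionOnto_apply_eq_zero_iff hc1).2
        (Submodule.mem_sup_left ⟨x, hx, rfl⟩)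
  choose f hfW hfM hfD' using hf
  have hfD : ∀ i, ∀ x ∈ M i, f (i + 1) (d i x) = 0 := fun i x hx => hfD' (i + 1) i rfl x hx
  have hh : ∀ i, ∃ h : V (i + 1) →ₗ[ℂ] V i, (∀ w ∈ W (i + 1), h w = 0) ∧
      (∀ x ∈ M (i + 1), h x = 0) ∧ (∀ x ∈ M i, h (d i x) = -x) := by
    intro i
    obtain ⟨-, hc⟩ := aux_compl _ _ _ (hdirect i)
    let e : M i →ₗ[ℂ] (M i).map (d i) := (d i).submoduleMap (M i)
    have he : Function.Bijective e := by
      refine ⟨(injective_iff_map_eq_zero _).2 fun x hx => ?_, LinearMap.submoduleMap_surjective _ _⟩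
      exact Subtype.ext (hinj i x x.2 (congrArg Subtype.val hx))
    let E := LinearEquiv.ofBijective e he
    refine ⟨-((M i).subtype ∘ₗ E.symm.toLinearMap ∘ₗ Submodule.projectionOnto _ _ hc),
      ?_, ?_, ?_⟩
    · intro w hw
      have := (Submodule.projectionOnto_apply_eq_zero_iff hc).2 (Submodule.mem_sup_left hw)
      simp [this]
    · intro w hw
      have := (Submodule.projectionOnto_apply_eq_zero_iff hc).2 (Submodule.mem_sup_right hw)
      simp [this]
    · intro x hx
      have h1 : Submodule.projectionOnto _ _ hc (d i x) = E ⟨x, hx⟩ :=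
        Submodule.projectionOnto_apply_left hc (E ⟨x, hx⟩)
      simp [h1]
  choose h hhW hhM hhD using hh
  have hhmem : ∀ i v, h i v ∈ M i := by
    intro i v
    obtain ⟨w, hw, m, hm, m', hm', rfl⟩ := hdec i v
    simp [hhW i w hw, hhM i m' hm', hhD i m hm, hm]
  refine ⟨f, fun i => (W i).subtype, h, ?_, ?_, ?_, ?_, ?_, ?_, ?_, fun _ => rfl, hfM, hfD⟩
  · intro i
    ext1 v
    obtain ⟨m, hm, e⟩ := hdm i v
    simp only [LinearMap.comp_apply, e, hfD i m hm, LinearMap.zero_apply]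
  · intro i
    ext1 w
    exact hWclosed i w.2
  · intro i
    ext1 w
    exact hfW i w
  · intro i
    ext1 v
    obtain ⟨w, hw, m, hm, m', hm', rfl⟩ := hdec i v
    have h1 : d (i + 1) w = 0 := hWclosed _ hw
    have h2 := hfW (i + 1) ⟨w, hw⟩
    simp only at h2
    simp [h1, h2, hdd, hfD i m hm, hfM _ m' hm', hhW i w hw, hhM i m' hm', hhD i m hm,
      hhD (i + 1) m' hm']
    exact add_comm _ _
  · intro i
    ext1 v
    exact hfM i _ (hhmem i v)
  · intro i
    ext1 w
    exact hhW i _ w.2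
  · intro i
    ext1 v
    exact hhM i _ (hhmem (i + 1) v)
end

section
/- Let (V, d_V) be a cochain complex of ℂ-vector spaces and let (W, 0) be a cochain complex with zero differential. Suppose given cochain maps f : V → W and g : W → V with f ∘ g = id_W and a homotopy h between g ∘ f and id_V satisfying the side conditions f ∘ h = 0, h ∘ g = 0 and h ∘ h = 0. Then the graded subspaces W' and 𝓜 of V defined by W'^i := g(W^i) and 𝓜^i := h(V^{i+1}) form a Hodge type decomposition of (V, d_V); in particular V^i = g(W^i) ⊕ d_V(h(V^i)) ⊕ h(V^{i+1}) as an internal direct sum for every i. -/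
/-!
STATEMENT 1: Given a cochain complex `(V, d)` of `ℂ`-vector spaces, a complex `(W, 0)`
with zero differential, cochain maps `f : V → W`, `g : W → V` with `f ∘ g = id_W` and a
homotopy `h` between `g ∘ f` and `id_V` satisfying the side conditions, the graded
subspaces `W' := g(W)` and `𝓜 := h(V)` form a Hodge type decomposition of `(V, d)`.
-/

theorem stmt_1
    (V : ℤ → Type) [∀ i, AddCommGroup (V i)] [∀ i, Module ℂ (V i)]
    (d : ∀ i, V i →ₗ[ℂ] V (i + 1))
    (hd : ∀ i, (d (i + 1)).comp (d i) = 0)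
    (W : ℤ → Type) [∀ i, AddCommGroup (W i)] [∀ i, Module ℂ (W i)]
    (f : ∀ i, V i →ₗ[ℂ] W i) (g : ∀ i, W i →ₗ[ℂ] V i)
    (h : ∀ i, V (i + 1) →ₗ[ℂ] V i)
    -- `f` and `g` are cochain maps (the differential of `W` is zero)
    (hf : ∀ i, (f (i + 1)).comp (d i) = 0)
    (hg : ∀ i, (d i).comp (g i) = 0)
    -- `f ∘ g = id_W`
    (hfg : ∀ i, (f i).comp (g i) = LinearMap.id)
    -- `h` is a homotopy between `g ∘ f` and `id_V`
    (hh : ∀ i, (g (i + 1)).comp (f (i + 1)) - LinearMap.id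
        = (d i).comp (h i) + (h (i + 1)).comp (d (i + 1)))
    -- side conditions
    (hfh : ∀ i, (f i).comp (h i) = 0)
    (hhg : ∀ i, (h i).comp (g (i + 1)) = 0)
    (hhh : ∀ i, (h i).comp (h (i + 1)) = 0) :
    -- `(g(W), h(V))` is a Hodge type decomposition of `(V, d)`:
    -- every element of `g(W)` is closed
    (∀ i, LinearMap.range (g i) ≤ LinearMap.ker (d i)) ∧
    -- internal direct sum `V = g(W) ⊕ d(h(V)) ⊕ h(V)` (in every degree)
    (∀ i, DirectSum.IsInternal
      ![LinearMap.range (g (i + 1)), (LinearMap.range (h i)).map (d i),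
        LinearMap.range (h (i + 1))]) ∧
    -- `g(W)` maps isomorphically onto cohomology
    (∀ i, LinearMap.range (g (i + 1)) ⊓ LinearMap.range (d i) = ⊥) ∧
    (∀ i, LinearMap.ker (d (i + 1)) ≤ LinearMap.range (g (i + 1)) ⊔ LinearMap.range (d i)) ∧
    -- `h(V)` contains no exact elements except `0`
    (∀ i, LinearMap.range (h (i + 1)) ⊓ LinearMap.range (d i) = ⊥) := by
  have hd' : ∀ i x, d (i + 1) (d i x) = 0 := fun i x => LinearMap.congr_fun (hd i) x
  have hf' : ∀ i x, f (i + 1) (d i x) = 0 := fun i x => LinearMap.congr_fun (hf i) x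
  have hg' : ∀ i x, d i (g i x) = 0 := fun i x => LinearMap.congr_fun (hg i) x
  have hfg' : ∀ i x, f i (g i x) = x := fun i x => LinearMap.congr_fun (hfg i) x
  have hfh' : ∀ i x, f i (h i x) = 0 := fun i x => LinearMap.congr_fun (hfh i) x
  have hhg' : ∀ i x, h i (g (i + 1) x) = 0 := fun i x => LinearMap.congr_fun (hhg i) x
  have hhh' : ∀ i x, h i (h (i + 1) x) = 0 := fun i x => LinearMap.congr_fun (hhh i) x
  have hh' : ∀ i x, g (i + 1) (f (i + 1) x) - x
      = d i (h i x) + h (i + 1) (d (i + 1) x) := fun i x => LinearMap.congr_fun (hh i) x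
  have dec : ∀ i x, x = g (i + 1) (f (i + 1) x) + (d i (h i (-x)) + h (i + 1) (d (i + 1) (-x))) := by
    intro i x
    have := hh' i x
    simp only [map_neg]
    rw [← neg_add, ← this]
    abel
  have key : ∀ i x, f (i + 1) x = 0 → h i x = 0 → d (i + 1) x = 0 → x = 0 := by
    intro i x h1 h2 h3
    rw [dec i x]
    simp [h1, h2, h3]
  refine ⟨?_, ?_, ?_, ?_, ?_⟩
  · rintro i _ ⟨w, rfl⟩
    exact hg' i w
  · intro i
    rw [DirectSum.isInternal_submodule_iff_iSupIndep_and_iSup_eq_top]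
    constructor
    · intro j
      rw [Submodule.disjoint_def]
      intro x hx hx'
      fin_cases j
      · have this : x ∈ LinearMap.ker (f (i + 1)) := by
          refine SetLike.le_def.mp ?_ hx'
          refine iSup₂_le ?_
          intro j hj
          fin_cases j
          · exact absurd rfl hj
          · rintro _ ⟨y, -, rfl⟩
            exact hf' i y
          · rintro _ ⟨y, rfl⟩
            exact hfh' (i + 1) y
        obtain ⟨w, rfl⟩ := hx
        have h0 := this
        rw [LinearMap.mem_ker, hfg'] at h0
        rw [h0, map_zero]
      · have this : x ∈ LinearMap.ker (h i) := by
          refine SetLike.le_def.mp ?_ hx'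
          refine iSup₂_le ?_
          intro j hj
          fin_cases j
          · rintro _ ⟨y, rfl⟩
            exact hhg' i y
          · exact absurd rfl hj
          · rintro _ ⟨y, rfl⟩
            exact hhh' i y
        obtain ⟨y, -, rfl⟩ := hx
        exact key i _ (hf' i y) this (hd' i y)
      · have this : x ∈ LinearMap.ker (d (i + 1)) := by
          refine SetLike.le_def.mp ?_ hx'
          refine iSup₂_le ?_
          intro j hj
          fin_cases j
          · rintro _ ⟨y, rfl⟩
            exact hg' _ y
          · rintro _ ⟨y, -, rfl⟩
            exact hd' i y
          · exact absurd rfl hj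
        obtain ⟨y, rfl⟩ := hx
        exact key i _ (hfh' _ y) (hhh' i y) this
    · rw [eq_top_iff]
      intro x _
      rw [dec i x]
      refine add_mem ?_ (add_mem ?_ ?_)
      · exact Submodule.mem_iSup_of_mem (0 : Fin 3) ⟨_, rfl⟩
      · exact Submodule.mem_iSup_of_mem (1 : Fin 3) ⟨_, ⟨_, rfl⟩, rfl⟩
      · exact Submodule.mem_iSup_of_mem (2 : Fin 3) ⟨_, rfl⟩
  · intro i
    rw [eq_bot_iff]
    rintro _ ⟨⟨w, rfl⟩, ⟨v, hv⟩⟩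
    have h0 := hf' i v
    rw [hv, hfg'] at h0
    rw [h0, map_zero]
    exact zero_mem _
  · intro i x hx
    rw [LinearMap.mem_ker] at hx
    rw [dec i x]
    refine Submodule.add_mem_sup ⟨_, rfl⟩ ?_
    rw [map_neg (d (i + 1)), hx, neg_zero, map_zero, add_zero]
    exact ⟨_, rfl⟩
  · intro i
    rw [eq_bot_iff]
    rintro _ ⟨⟨y, rfl⟩, ⟨v, hv⟩⟩
    refine key i _ (hfh' _ y) (hhh' i y) ?_
    rw [← hv, hd']
end

section
/- Let (V, d_V) and (W, d_W) be cochain complexes of ℂ-vector spaces, and let f : V → W and g : W → V be cochain maps with f ∘ g = id_W such that g ∘ f is homotopic to id_V (i.e. there exists some homotopy h₀ with g ∘ f − id_V = d_V ∘ h₀ + h₀ ∘ d_V). Then there exists a homotopy h between g ∘ f and id_V satisfying the side conditions f ∘ h = 0, h ∘ g = 0 and h ∘ h = 0. -/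
/-!
STATEMENT 2: Given cochain complexes `(V, d_V)`, `(W, d_W)` of `ℂ`-vector spaces and
cochain maps `f : V → W`, `g : W → V` with `f ∘ g = id_W` such that `g ∘ f` is homotopic
to `id_V`, there exists a homotopy `h` between `g ∘ f` and `id_V` satisfying the side
conditions `f ∘ h = 0`, `h ∘ g = 0`, `h ∘ h = 0`.
-/

theorem stmt_2
    (V : ℤ → Type) [∀ i, AddCommGroup (V i)] [∀ i, Module ℂ (V i)]
    (dV : ∀ i, V i →ₗ[ℂ] V (i + 1))
    (hdV : ∀ i, (dV (i + 1)).comp (dV i) = 0)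
    (W : ℤ → Type) [∀ i, AddCommGroup (W i)] [∀ i, Module ℂ (W i)]
    (dW : ∀ i, W i →ₗ[ℂ] W (i + 1))
    (hdW : ∀ i, (dW (i + 1)).comp (dW i) = 0)
    (f : ∀ i, V i →ₗ[ℂ] W i) (g : ∀ i, W i →ₗ[ℂ] V i)
    -- `f` and `g` are cochain maps
    (hf : ∀ i, (f (i + 1)).comp (dV i) = (dW i).comp (f i))
    (hg : ∀ i, (g (i + 1)).comp (dW i) = (dV i).comp (g i))
    -- `f ∘ g = id_W`
    (hfg : ∀ i, (f i).comp (g i) = LinearMap.id)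
    -- `g ∘ f` is homotopic to `id_V` via some homotopy `h₀`
    (h₀ : ∀ i, V (i + 1) →ₗ[ℂ] V i)
    (hh₀ : ∀ i, (g (i + 1)).comp (f (i + 1)) - LinearMap.id
        = (dV i).comp (h₀ i) + (h₀ (i + 1)).comp (dV (i + 1))) :
    -- then there is a homotopy `h` between `g ∘ f` and `id_V` with the side conditions
    ∃ h : ∀ i, V (i + 1) →ₗ[ℂ] V i,
      (∀ i, (g (i + 1)).comp (f (i + 1)) - LinearMap.id
          = (dV i).comp (h i) + (h (i + 1)).comp (dV (i + 1))) ∧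
      (∀ i, (f i).comp (h i) = 0) ∧
      (∀ i, (h i).comp (g (i + 1)) = 0) ∧
      (∀ i, (h i).comp (h (i + 1)) = 0) := by
  have ef : ∀ i x, f (i+1) (dV i x) = dW i (f i x) := fun i x => LinearMap.congr_fun (hf i) x
  have eg : ∀ i x, g (i+1) (dW i x) = dV i (g i x) := fun i x => LinearMap.congr_fun (hg i) x
  have efg : ∀ i x, f i (g i x) = x := fun i x => LinearMap.congr_fun (hfg i) x
  have ed : ∀ i x, dV (i+1) (dV i x) = 0 := fun i x => LinearMap.congr_fun (hdV i) x
  have eh₀ : ∀ i x, g (i+1) (f (i+1) x) - x = dV i (h₀ i x) + h₀ (i+1) (dV (i+1) x) :=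
    fun i x => LinearMap.congr_fun (hh₀ i) x
  -- first step: enforce `f h = 0` and `h g = 0`
  obtain ⟨k, hk, fk, kg⟩ : ∃ k : ∀ i, V (i + 1) →ₗ[ℂ] V i,
      (∀ i x, g (i+1) (f (i+1) x) - x = dV i (k i x) + k (i+1) (dV (i+1) x)) ∧
      (∀ i x, f i (k i x) = 0) ∧ (∀ i x, k i (g (i+1) x) = 0) := by
    let D : ∀ i, V i →ₗ[ℂ] V i := fun i => (g i).comp (f i) - LinearMap.id
    have hD : ∀ i x, D i x = g i (f i x) - x := fun i x => rfl
    have Dd : ∀ i x, D (i+1) (dV i x) = dV i (D i x) := by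
      intro i x
      simp only [hD, ef, eg, map_sub]
    have fD : ∀ i x, f i (D i x) = 0 := by
      intro i x
      simp only [hD, efg, map_sub, sub_self]
    have Dg : ∀ i x, D i (g i x) = 0 := by
      intro i x
      simp only [hD, efg, sub_self]
    have DD : ∀ i x, D i (D i x) = - D i x := by
      intro i x
      rw [hD i (D i x), fD, map_zero, zero_sub]
    refine ⟨fun i => (D i).comp ((h₀ i).comp (D (i+1))), ?_, ?_, ?_⟩
    · intro i x
      simp only [LinearMap.comp_apply]
      rw [← Dd, Dd (i+1), ← map_add, ← eh₀, ← hD, ← hD, DD, DD, neg_neg]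
    · intro i x
      exact fD _ _
    · intro i x
      simp only [LinearMap.comp_apply, Dg, map_zero]
  have kdk1 : ∀ i x, k i (dV i (k i x)) = - k i x - k i (k (i+1) (dV (i+1) x)) := by
    intro i x
    have h := congrArg (k i) (hk i x)
    rw [map_sub, kg, map_add, zero_sub] at h
    rw [h, add_sub_cancel_right]
  have kdk2 : ∀ i x, k (i+1) (dV (i+1) (k (i+1) x)) = - k (i+1) x - dV i (k i (k (i+1) x)) := by
    intro i x
    have h := hk i (k (i+1) x)
    rw [fk, map_zero, zero_sub] at h
    rw [h, add_sub_cancel_left]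
  have comm : ∀ i x, dV i (k i (k (i+1) x)) = k (i+1) (k (i+1+1) (dV (i+1+1) x)) := by
    intro i x
    have h := kdk2 i x
    rw [kdk1 (i+1) x] at h
    exact (sub_right_injective h).symm
  refine ⟨fun i => -((k i).comp ((dV i).comp (k i))), ?_, ?_, ?_, ?_⟩
  · intro i
    ext x
    simp only [LinearMap.comp_apply, LinearMap.sub_apply, LinearMap.add_apply,
      LinearMap.neg_apply, LinearMap.id_apply, map_neg]
    rw [kdk1 i x, kdk1 (i+1) (dV (i+1) x), ed, hk i x]
    simp only [map_sub, map_neg, map_zero]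
    rw [comm, ed]
    simp only [map_zero]
    abel
  · intro i
    ext x
    simp [fk]
  · intro i
    ext x
    simp [kg]
  · intro i
    ext x
    simp [comm, ed]
end

section
/- Fix τ ∈ ℂ with Im τ > 0 and let Λ := { m + n·τ : m, n ∈ ℤ }. Let f : ℕ → (ℂ → ℂ) be a family of functions, each holomorphic on ℂ ∖ Λ, such that for all ξ ∈ ℂ ∖ Λ, all n ∈ ℕ and all l ∈ ℤ: f 0 ξ = 1, f n (ξ + l) = f n ξ, and f n (ξ + l·τ) = Σ_{j=0}^{n} f (n−j) ξ · (−2πi l)^j / j!. Then the family { f n }_{n ∈ ℕ}, regarded as functions on ℂ ∖ Λ, is linearly independent over ℂ: if a finitely supported family of scalars λ : ℕ → ℂ satisfies Σ_n λ_n · f n ξ = 0 for all ξ ∈ ℂ ∖ Λ, then λ_n = 0 for all n. -/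
/-!
STATEMENT 4: A family of holomorphic functions on `ℂ ∖ (ℤ + τℤ)` satisfying the
quasi-periodicity conditions (2.1) is linearly independent over `ℂ`.
-/

open Complex

theorem stmt_4 (τ : ℂ) (hτ : 0 < τ.im)
    (f : ℕ → ℂ → ℂ)
    -- each `f n` is holomorphic on `ℂ ∖ (ℤ + τℤ)`
    (hol : ∀ n : ℕ, DifferentiableOn ℂ (f n) {z : ℂ | ¬ ∃ m k : ℤ, z = (m : ℂ) + (k : ℂ) * τ})
    -- `f 0 = 1`
    (h0 : ∀ ξ : ℂ, (¬ ∃ m k : ℤ, ξ = (m : ℂ) + (k : ℂ) * τ) → f 0 ξ = 1)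
    -- `f n (ξ + l) = f n ξ`
    (hper : ∀ ξ : ℂ, (¬ ∃ m k : ℤ, ξ = (m : ℂ) + (k : ℂ) * τ) →
      ∀ (n : ℕ) (l : ℤ), f n (ξ + (l : ℂ)) = f n ξ)
    -- `f n (ξ + lτ) = Σ_{j=0}^{n} f (n-j) ξ · (−2πi l)^j / j!`
    (hqper : ∀ ξ : ℂ, (¬ ∃ m k : ℤ, ξ = (m : ℂ) + (k : ℂ) * τ) →
      ∀ (n : ℕ) (l : ℤ), f n (ξ + (l : ℂ) * τ) =
        ∑ j ∈ Finset.range (n + 1),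
          f (n - j) ξ * (-2 * (Real.pi : ℂ) * Complex.I * (l : ℂ)) ^ j / (Nat.factorial j : ℂ))
    -- any finitely supported vanishing linear combination is trivial
    (lam : ℕ →₀ ℂ)
    (hlam : ∀ ξ : ℂ, (¬ ∃ m k : ℤ, ξ = (m : ℂ) + (k : ℂ) * τ) →
      ∑ n ∈ lam.support, lam n * f n ξ = 0) :
    lam = 0 := by
  have hx : ¬ ∃ m k : ℤ, (1 / 2 : ℂ) = (m : ℂ) + (k : ℂ) * τ := by
    rintro ⟨m, k, h⟩
    have h1 := congrArg Complex.im h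
    have h2 := congrArg Complex.re h
    have hk : k = 0 := by
      have : (k : ℝ) * τ.im = 0 := by simpa using h1.symm
      rcases mul_eq_zero.1 this with h | h
      · exact_mod_cast h
      · exact absurd h hτ.ne'
    subst hk
    have h3 : (1 / 2 : ℝ) = m := by
      norm_num at h2
      linarith
    have h4 : (1 : ℝ) = ((2 * m : ℤ) : ℝ) := by push_cast; linarith
    have h5 : (1 : ℤ) = 2 * m := by exact_mod_cast h4
    omega
  generalize (1 / 2 : ℂ) = ξ at hx
  have hxl : ∀ l : ℤ, ¬ ∃ m k : ℤ, ξ + (l : ℂ) * τ = (m : ℂ) + (k : ℂ) * τ := by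
    rintro l ⟨m, k, h⟩
    refine hx ⟨m, k - l, ?_⟩
    push_cast
    linear_combination h
  by_contra hne
  have hs : lam.support.Nonempty := Finsupp.support_nonempty_iff.2 hne
  obtain ⟨N, hN, hmax⟩ := lam.support.exists_max_image id hs
  let P : Polynomial ℂ := ∑ n ∈ lam.support, ∑ j ∈ Finset.range (n + 1),
    Polynomial.C (lam n * f (n - j) ξ / (Nat.factorial j : ℂ)) * Polynomial.X ^ j
  have hroot : ∀ l : ℤ, P.eval (-2 * (Real.pi : ℂ) * Complex.I * (l : ℂ)) = 0 := by
    intro l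
    rw [← hlam _ (hxl l)]
    simp only [P, Polynomial.eval_finset_sum, Polynomial.eval_mul, Polynomial.eval_C,
      Polynomial.eval_pow, Polynomial.eval_X]
    refine Finset.sum_congr rfl fun n _ => ?_
    rw [hqper ξ hx, Finset.mul_sum]
    refine Finset.sum_congr rfl fun j _ => ?_
    ring
  have hP : P = 0 := by
    refine Polynomial.eq_zero_of_infinite_isRoot P
      (Set.Infinite.mono ?_ (Set.infinite_range_of_injective
        (f := fun l : ℤ => -2 * (Real.pi : ℂ) * Complex.I * (l : ℂ)) ?_))
    · rintro _ ⟨l, rfl⟩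
      exact hroot l
    · intro a b h
      have hc : -2 * (Real.pi : ℂ) * Complex.I ≠ 0 := by
        simp [Real.pi_ne_zero]
      exact_mod_cast mul_left_cancel₀ hc h
  have hcoeff : P.coeff N = lam N / (Nat.factorial N : ℂ) := by
    simp only [P, Polynomial.finset_sum_coeff, Polynomial.coeff_C_mul_X_pow]
    rw [Finset.sum_eq_single_of_mem N hN]
    · rw [Finset.sum_eq_single_of_mem N (by simp)]
      · simp [h0 ξ hx]
      · intro j _ hj
        rw [if_neg hj.symm]
    · intro n hn hnN
      refine Finset.sum_eq_zero fun j hj => ?_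
      have h1 : n ≤ N := hmax n hn
      have h2 := Finset.mem_range.1 hj
      rw [if_neg (by omega)]
  rw [hP, Polynomial.coeff_zero] at hcoeff
  have hf : (Nat.factorial N : ℂ) ≠ 0 := by exact_mod_cast Nat.factorial_ne_zero N
  exact Finsupp.mem_support_iff.1 hN ((div_eq_zero_iff.1 hcoeff.symm).resolve_right hf)
end

section
/- For every τ ∈ ℂ with Im τ > 0 and every ξ ∈ ℂ, one has θ(ξ, τ) = 0 if and only if ξ ∈ ℤ + τℤ, i.e. if and only if there exist integers m, n with ξ = m + n·τ. -/
open Complex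

/-- The "two thirds of the Jacobi triple product formula":
`θ(ξ, τ) = q^{1/12} (z^{1/2} - z^{-1/2}) ∏_{j≥1} (1 - qʲz) ∏_{j≥1} (1 - qʲz⁻¹)`
with `q = exp(2πiτ)`, `z = exp(2πiξ)`. -/
noncomputable def theta (ξ τ : ℂ) : ℂ :=
  Complex.exp ((Real.pi : ℂ) * Complex.I * τ / 6) *
    (Complex.exp ((Real.pi : ℂ) * Complex.I * ξ) -
      Complex.exp (-((Real.pi : ℂ) * Complex.I * ξ))) *
    (∏' j : ℕ, (1 - Complex.exp (2 * (Real.pi : ℂ) * Complex.I * (((j : ℂ) + 1) * τ + ξ)))) *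
    (∏' j : ℕ, (1 - Complex.exp (2 * (Real.pi : ℂ) * Complex.I * (((j : ℂ) + 1) * τ - ξ))))

lemma aux_fac (w : ℂ) :
    1 - Complex.exp (2 * (Real.pi : ℂ) * Complex.I * w) = 0 ↔ ∃ m : ℤ, w = m := by
  rw [sub_eq_zero, eq_comm, Complex.exp_eq_one_iff]
  refine exists_congr fun m => ?_
  have h : (2 * (Real.pi : ℂ) * Complex.I) ≠ 0 := Complex.two_pi_I_ne_zero
  rw [mul_comm (m : ℂ)]
  exact mul_right_inj' h

lemma aux_prod (τ : ℂ) (hτ : 0 < τ.im) (ξ : ℂ) :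
    (∏' j : ℕ, (1 - Complex.exp (2 * (Real.pi : ℂ) * Complex.I * (((j : ℂ) + 1) * τ + ξ)))) = 0 ↔
      ∃ j : ℕ, ∃ m : ℤ, ((j : ℂ) + 1) * τ + ξ = m := by
  simp_rw [← aux_fac]
  constructor
  · intro h
    by_contra! hc
    refine tprod_one_add_ne_zero_of_summable (R := ℂ)
      (f := fun j : ℕ => - Complex.exp (2 * (Real.pi : ℂ) * Complex.I * (((j : ℂ) + 1) * τ + ξ)))
      (fun j => by simpa [sub_eq_add_neg] using hc j) ?_ (by simpa [sub_eq_add_neg] using h)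
    have hq : ‖Complex.exp (2 * (Real.pi : ℂ) * Complex.I * τ)‖ < 1 := by
      rw [Complex.norm_exp, Real.exp_lt_one_iff]
      simp
      positivity
    have := (summable_geometric_of_lt_one (norm_nonneg _) hq).mul_left
      ‖Complex.exp (2 * (Real.pi : ℂ) * Complex.I * (τ + ξ))‖
    refine this.congr fun j => ?_
    rw [norm_neg, ← norm_pow, ← norm_mul, ← Complex.exp_nat_mul, ← Complex.exp_add]
    congr 2
    ring
  · exact fun h => tprod_of_exists_eq_zero h

lemma aux_sin (ξ : ℂ) :
    Complex.exp ((Real.pi : ℂ) * Complex.I * ξ) -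
      Complex.exp (-((Real.pi : ℂ) * Complex.I * ξ)) = 0 ↔ ∃ m : ℤ, ξ = m := by
  rw [← aux_fac]
  have h : 1 - Complex.exp (2 * (Real.pi : ℂ) * Complex.I * ξ) =
      -Complex.exp ((Real.pi : ℂ) * Complex.I * ξ) *
      (Complex.exp ((Real.pi : ℂ) * Complex.I * ξ) -
      Complex.exp (-((Real.pi : ℂ) * Complex.I * ξ))) := by
    rw [mul_sub, neg_mul, neg_mul, ← Complex.exp_add, ← Complex.exp_add, add_neg_cancel,
      Complex.exp_zero, show 2 * (Real.pi : ℂ) * Complex.I * ξ =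
        (Real.pi : ℂ) * Complex.I * ξ + (Real.pi : ℂ) * Complex.I * ξ by ring]
    ring
  rw [h, mul_eq_zero, neg_eq_zero]
  simp [Complex.exp_ne_zero]

/-- `θ(ξ, τ) = 0` iff `ξ ∈ ℤ + τℤ`. -/
theorem stmt_5 (τ : ℂ) (hτ : 0 < τ.im) (ξ : ℂ) :
    theta ξ τ = 0 ↔ ∃ m n : ℤ, ξ = (m : ℂ) + (n : ℂ) * τ := by
  have h2 := aux_prod τ hτ (-ξ)
  simp only [← sub_eq_add_neg] at h2
  rw [theta, mul_eq_zero, mul_eq_zero, mul_eq_zero, aux_sin, aux_prod τ hτ, h2]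
  constructor
  · rintro (((h | ⟨m, h⟩) | ⟨j, m, h⟩) | ⟨j, m, h⟩)
    · exact absurd h (Complex.exp_ne_zero _)
    · exact ⟨m, 0, by simp [h]⟩
    · exact ⟨m, -(j + 1), by push_cast; linear_combination h⟩
    · exact ⟨-m, j + 1, by push_cast; linear_combination -h⟩
  · rintro ⟨m, n, rfl⟩
    rcases lt_trichotomy n 0 with hn | rfl | hn
    · obtain ⟨j, hj⟩ := Int.eq_ofNat_of_zero_le (show 0 ≤ -n - 1 by omega)
      obtain rfl : n = -(j + 1) := by omega
      exact Or.inl (Or.inr ⟨j, m, by push_cast; ring⟩)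
    · exact Or.inl (Or.inl (Or.inr ⟨m, by simp⟩))
    · obtain ⟨j, hj⟩ := Int.eq_ofNat_of_zero_le (show 0 ≤ n - 1 by omega)
      obtain rfl : n = j + 1 := by omega
      exact Or.inr ⟨j, -m, by push_cast; ring⟩
end

section
/- Let τ ∈ ℂ with Im τ > 0 and let ξ, η ∈ ℂ satisfy θ(ξ, τ) ≠ 0 and θ(η, τ) ≠ 0. Then the Kronecker function satisfies the quasi-periodicity F(ξ + τ, η, τ) = exp(−2πiη) · F(ξ, η, τ). -/
open Complex

/-- The Kronecker function `F(ξ, η, τ) = θ′(0, τ) · θ(ξ + η, τ) / (θ(ξ, τ) · θ(η, τ))`,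
where `θ′(0, τ)` is the derivative of `ξ ↦ θ(ξ, τ)` at `ξ = 0`. -/
noncomputable def kronF (ξ η τ : ℂ) : ℂ :=
  deriv (fun z => theta z τ) 0 * theta (ξ + η) τ / (theta ξ τ * theta η τ)

noncomputable def auxP (τ z : ℂ) : ℂ :=
  ∏' j : ℕ, (1 - Complex.exp (2 * (Real.pi : ℂ) * Complex.I * ((j : ℂ) * τ + z)))

theorem auxP_mult (τ : ℂ) (hτ : 0 < τ.im) (z : ℂ) :
    Multipliable (fun j : ℕ =>
      (1 - Complex.exp (2 * (Real.pi : ℂ) * Complex.I * ((j : ℂ) * τ + z)))) := by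
  have hq : ‖Complex.exp (2 * (Real.pi : ℂ) * Complex.I * τ)‖ < 1 := by
    rw [Complex.norm_exp, Real.exp_lt_one_iff]
    have : (2 * (Real.pi : ℂ) * Complex.I * τ).re = -(2 * Real.pi * τ.im) := by simp
    rw [this]
    have := Real.pi_pos
    have : 0 < 2 * Real.pi * τ.im := by positivity
    linarith
  have h1 : Summable (fun j : ℕ =>
      ‖-Complex.exp (2 * (Real.pi : ℂ) * Complex.I * ((j : ℂ) * τ + z))‖) := by
    have h2 := (summable_geometric_of_lt_one (norm_nonneg _) hq).mul_right
      ‖Complex.exp (2 * (Real.pi : ℂ) * Complex.I * z)‖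
    refine h2.congr fun j => ?_
    rw [norm_neg, ← norm_pow, ← norm_mul, ← Complex.exp_nat_mul, ← Complex.exp_add]
    congr 2
    ring
  simpa only [sub_eq_add_neg] using multipliable_one_add_of_summable h1

theorem auxP_rec (τ : ℂ) (hτ : 0 < τ.im) (z : ℂ) :
    auxP τ z = (1 - Complex.exp (2 * (Real.pi : ℂ) * Complex.I * z)) * auxP τ (z + τ) := by
  have e : ∀ j : ℕ, 2 * (Real.pi : ℂ) * Complex.I * (((j + 1 : ℕ) : ℂ) * τ + z)
      = 2 * (Real.pi : ℂ) * Complex.I * ((j : ℂ) * τ + (z + τ)) := by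
    intro j; push_cast; ring
  unfold auxP
  rw [tprod_eq_zero_mul']
  · simp only [e]
    simp
  · simp only [e]
    exact auxP_mult τ hτ (z + τ)

theorem theta_eq (τ z : ℂ) : theta z τ = Complex.exp ((Real.pi : ℂ) * Complex.I * τ / 6) *
    (Complex.exp ((Real.pi : ℂ) * Complex.I * z) -
      Complex.exp (-((Real.pi : ℂ) * Complex.I * z))) * auxP τ (z + τ) * auxP τ (-z + τ) := by
  unfold theta auxP
  congr 2
  · congr 1; congr 1; funext j; congr 3; ring
  · funext j; congr 3; ring

theorem theta_shift (τ : ℂ) (hτ : 0 < τ.im) (z : ℂ) :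
    theta (z + τ) τ = -Complex.exp (-((Real.pi : ℂ) * Complex.I * (2 * z + τ))) * theta z τ := by
  rw [theta_eq, theta_eq, auxP_rec τ hτ (z + τ)]
  have h0 : -(z + τ) + τ = -z := by ring
  rw [h0, auxP_rec τ hτ (-z)]
  have h1 : Complex.exp ((Real.pi : ℂ) * Complex.I * (z + τ)) -
      Complex.exp (-((Real.pi : ℂ) * Complex.I * (z + τ))) =
      -Complex.exp (-((Real.pi : ℂ) * Complex.I * (z + τ))) *
        (1 - Complex.exp (2 * (Real.pi : ℂ) * Complex.I * (z + τ))) := by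
    rw [mul_sub, neg_mul, neg_mul, ← Complex.exp_add]
    ring_nf
  have h2 : Complex.exp (-((Real.pi : ℂ) * Complex.I * (2 * z + τ))) *
      (Complex.exp ((Real.pi : ℂ) * Complex.I * z) -
      Complex.exp (-((Real.pi : ℂ) * Complex.I * z))) =
      Complex.exp (-((Real.pi : ℂ) * Complex.I * (z + τ))) *
        (1 - Complex.exp (2 * (Real.pi : ℂ) * Complex.I * (-z))) *
        1 := by
    rw [mul_sub, mul_one, mul_sub, ← Complex.exp_add, ← Complex.exp_add, ← Complex.exp_add]
    ring_nf
  rw [h1]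
  linear_combination (Complex.exp ((Real.pi : ℂ) * Complex.I * τ / 6) *
    (1 - Complex.exp (2 * (Real.pi : ℂ) * Complex.I * (z + τ))) * auxP τ (z + τ + τ) *
    auxP τ (-z + τ)) * h2

/-- quasi-periodicity `F(ξ + τ, η, τ) = exp(-2πiη) · F(ξ, η, τ)`. -/
theorem stmt_10 (τ : ℂ) (hτ : 0 < τ.im) (ξ η : ℂ)
    (hξ : theta ξ τ ≠ 0) (hη : theta η τ ≠ 0) :
    kronF (ξ + τ) η τ = Complex.exp (-(2 * (Real.pi : ℂ) * Complex.I * η)) * kronF ξ η τ := by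
  unfold kronF
  have h : ξ + τ + η = (ξ + η) + τ := by ring
  rw [h, theta_shift τ hτ, theta_shift τ hτ ξ]
  have e : Complex.exp (-((Real.pi : ℂ) * Complex.I * (2 * (ξ + η) + τ))) =
      Complex.exp (-(2 * (Real.pi : ℂ) * Complex.I * η)) *
      Complex.exp (-((Real.pi : ℂ) * Complex.I * (2 * ξ + τ))) := by
    rw [← Complex.exp_add]; ring_nf
  rw [e]
  have := Complex.exp_ne_zero (-((Real.pi : ℂ) * Complex.I * (2 * ξ + τ)))
  field_simp
end

section
/- Let L be a Lie algebra over a commutative ring, let ι be a type, and let x, y : ι → L. For i ≠ j set t_{ij} := ⁅x_i, y_j⁆. Assume: (a) ⁅x_i, y_j⁆ = ⁅x_j, y_i⁆ for all i ≠ j; (b) ⁅x_i, t_{jk}⁆ = 0 and ⁅y_i, t_{jk}⁆ = 0 for all pairwise distinct i, j, k; (c) ⁅x_i + x_j, t_{ij}⁆ = 0 and ⁅y_i + y_j, t_{ij}⁆ = 0 for all i ≠ j. Then: (1) ⁅t_{ij}, t_{kl}⁆ = 0 for all pairwise distinct i, j, k, l, and (2) ⁅t_{ij}, t_{ik} + t_{jk}⁆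 = 0 for all pairwise distinct i, j, k. That is, the Kohno–Drinfeld relations among the t_{ij} follow from the relations (a)–(c) and the Jacobi identity. -/
/-!
STATEMENT 16: the Kohno–Drinfeld relations among `t_{ij} := ⁅x_i, y_j⁆` follow from the
relations (a)–(c) and the Jacobi identity.
-/

theorem stmt_16 {R L ι : Type*} [CommRing R] [LieRing L] [LieAlgebra R L]
    (x y : ι → L)
    -- (a) symmetry: `t_{ij} = t_{ji}`
    (ha : ∀ i j, i ≠ j → ⁅x i, y j⁆ = ⁅x j, y i⁆)
    -- (b) `⁅x_i, t_{jk}⁆ = 0` and `⁅y_i, t_{jk}⁆ = 0` for `i, j, k` pairwise distinct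
    (hbx : ∀ i j k, i ≠ j → i ≠ k → j ≠ k → ⁅x i, ⁅x j, y k⁆⁆ = 0)
    (hby : ∀ i j k, i ≠ j → i ≠ k → j ≠ k → ⁅y i, ⁅x j, y k⁆⁆ = 0)
    -- (c) `⁅x_i + x_j, t_{ij}⁆ = 0` and `⁅y_i + y_j, t_{ij}⁆ = 0` for `i ≠ j`
    (hcx : ∀ i j, i ≠ j → ⁅x i + x j, ⁅x i, y j⁆⁆ = 0)
    (hcy : ∀ i j, i ≠ j → ⁅y i + y j, ⁅x i, y j⁆⁆ = 0) :
    -- (1) `⁅t_{ij}, t_{kl}⁆ = 0` for `i, j, k, l` pairwise distinct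
    (∀ i j k l, i ≠ j → i ≠ k → i ≠ l → j ≠ k → j ≠ l → k ≠ l →
      ⁅⁅x i, y j⁆, ⁅x k, y l⁆⁆ = 0) ∧
    -- (2) `⁅t_{ij}, t_{ik} + t_{jk}⁆ = 0` for `i, j, k` pairwise distinct
    (∀ i j k, i ≠ j → i ≠ k → j ≠ k →
      ⁅⁅x i, y j⁆, ⁅x i, y k⁆ + ⁅x j, y k⁆⁆ = 0) := by
  refine ⟨?_, ?_⟩
  · intro i j k l hij hik hil hjk hjl hkl
    rw [lie_lie, hby j k l hjk hjl hkl, hbx i k l hik hil hkl, lie_zero, lie_zero, sub_zero]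
  · intro i j k hij hik hjk
    have h1 : ⁅⁅x i, y j⁆, x i + x j⁆ = 0 := by
      rw [← lie_skew, hcx i j hij, neg_zero]
    have h2 : ⁅⁅x i, y j⁆, y k⁆ = 0 := by
      rw [← lie_skew, hby k i j hik.symm hjk.symm hij, neg_zero]
    rw [← add_lie, leibniz_lie, h1, h2, zero_lie, lie_zero, add_zero]
end

section
/- Fix an integer n ≥ 1. Let L̃_n be the quotient of the free Lie algebra over ℚ on generators X̃_1, …, X̃_n, Ỹ_1, …, Ỹ_n and t̃_{ij} (1 ≤ i ≠ j ≤ n) by the Lie ideal generated by the relators: t̃_{ij} − t̃_{ji}; t̃_{ij} − ⁅X̃_i, Ỹ_j⁆ (i ≠ j); ⁅X̃_i, X̃_j⁆ and ⁅Ỹ_i, Ỹ_j⁆ (i ≠ j); ⁅X̃_i, t̃_{jk}⁆ and ⁅Ỹ_i, t̃_{jk}⁆ (i, j, k distinct); ⁅X̃_i + X̃_j, t̃_{ij}⁆ and ⁅Ỹ_i + Ỹ_j, t̃_{ij}⁆ (i ≠ j). Then the assignment X̃_i ↦ X_i, Ỹ_i ↦ Y_i, t̃_{ij} ↦ t_{ij}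 (for 1 ≤ i, j ≤ n, viewed among the n+1 indices of t̄_{1,n+1}) determines a well-defined Lie algebra homomorphism L̃_n → t̄_{1,n+1}, and this homomorphism is an isomorphism. -/
/-- Generators of the Lie algebra `t_{1,n}`: `X_i`, `Y_i` (`i ∈ Fin n`), and
`t_{ij}` for `i ≠ j`. -/
abbrev ElGen (n : ℕ) : Type := Fin n ⊕ Fin n ⊕ {p : Fin n × Fin n // p.1 ≠ p.2}

/-- The generator `X_i` of the free Lie algebra. -/
noncomputable def genX {n : ℕ} (i : Fin n) : FreeLieAlgebra ℚ (ElGen n) :=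
  FreeLieAlgebra.of ℚ (Sum.inl i)

/-- The generator `Y_i` of the free Lie algebra. -/
noncomputable def genY {n : ℕ} (i : Fin n) : FreeLieAlgebra ℚ (ElGen n) :=
  FreeLieAlgebra.of ℚ (Sum.inr (Sum.inl i))

/-- The generator `t_{ij}` (`i ≠ j`) of the free Lie algebra. -/
noncomputable def genT {n : ℕ} (i j : Fin n) (h : i ≠ j) : FreeLieAlgebra ℚ (ElGen n) :=
  FreeLieAlgebra.of ℚ (Sum.inr (Sum.inr ⟨(i, j), h⟩))

/-- The relators defining `t_{1,n}`. -/
def t1Rel (n : ℕ) : Set (FreeLieAlgebra ℚ (ElGen n)) :=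
  -- t_{ij} = t_{ji}
  {z | ∃ i j, ∃ h : i ≠ j, z = genT i j h - genT j i h.symm} ∪
  -- t_{ij} = ⁅X_i, Y_j⁆
  {z | ∃ i j, ∃ h : i ≠ j, z = genT i j h - ⁅genX i, genY j⁆} ∪
  -- ⁅X_i, X_j⁆ = 0, ⁅Y_i, Y_j⁆ = 0
  {z | ∃ i j, i ≠ j ∧ z = ⁅genX i, genX j⁆} ∪
  {z | ∃ i j, i ≠ j ∧ z = ⁅genY i, genY j⁆} ∪
  -- ⁅X_i, Y_i⁆ = -Σ_{j ≠ i} t_{ij}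
  {z | ∃ i, z = ⁅genX i, genY i⁆ + ∑ j : Fin n, if h : i ≠ j then genT i j h else 0} ∪
  -- ⁅t_{ij}, t_{ik} + t_{jk}⁆ = 0 for i, j, k distinct
  {z | ∃ i j k, ∃ (hij : i ≠ j) (hik : i ≠ k) (hjk : j ≠ k),
    z = ⁅genT i j hij, genT i k hik + genT j k hjk⁆} ∪
  -- ⁅t_{ij}, t_{kl}⁆ = 0 for i, j, k, l distinct
  {z | ∃ i j k l, ∃ (hij : i ≠ j) (hkl : k ≠ l),
    i ≠ k ∧ i ≠ l ∧ j ≠ k ∧ j ≠ l ∧ z = ⁅genT i j hij, genT k l hkl⁆} ∪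
  -- ⁅X_i, t_{jk}⁆ = 0, ⁅Y_i, t_{jk}⁆ = 0 for i, j, k distinct
  {z | ∃ i j k, ∃ hjk : j ≠ k, i ≠ j ∧ i ≠ k ∧ z = ⁅genX i, genT j k hjk⁆} ∪
  {z | ∃ i j k, ∃ hjk : j ≠ k, i ≠ j ∧ i ≠ k ∧ z = ⁅genY i, genT j k hjk⁆} ∪
  -- ⁅X_i + X_j, t_{ij}⁆ = 0, ⁅Y_i + Y_j, t_{ij}⁆ = 0 for i ≠ j
  {z | ∃ i j, ∃ h : i ≠ j, z = ⁅genX i + genX j, genT i j h⁆} ∪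
  {z | ∃ i j, ∃ h : i ≠ j, z = ⁅genY i + genY j, genT i j h⁆}

/-- The Lie ideal generated by the relators of `t_{1,n}`. -/
noncomputable def t1Ideal (n : ℕ) : LieIdeal ℚ (FreeLieAlgebra ℚ (ElGen n)) :=
  LieSubmodule.lieSpan ℚ (FreeLieAlgebra ℚ (ElGen n)) (t1Rel n)

/-- The Lie algebra `t_{1,n}`. -/
abbrev t1 (n : ℕ) : Type _ := FreeLieAlgebra ℚ (ElGen n) ⧸ t1Ideal n

/-- The quotient map onto `t_{1,n}`. -/
noncomputable def t1Mk (n : ℕ) : FreeLieAlgebra ℚ (ElGen n) → t1 n :=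
  LieSubmodule.Quotient.mk (N := t1Ideal n)

/-- The Lie ideal of `t_{1,n}` generated by `Σ X_i` and `Σ Y_i`. -/
noncomputable def centralIdeal (n : ℕ) : LieIdeal ℚ (t1 n) :=
  LieSubmodule.lieSpan ℚ (t1 n)
    {t1Mk n (∑ i : Fin n, genX i), t1Mk n (∑ i : Fin n, genY i)}

/-- The Lie algebra `t̄_{1,n}`, the quotient of `t_{1,n}` by the central elements
`Σ X_i` and `Σ Y_i`. -/
abbrev t1Bar (n : ℕ) : Type _ := t1 n ⧸ centralIdeal n

/-- The canonical map from the free Lie algebra onto `t̄_{1,n}`. -/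
noncomputable def t1BarMk (n : ℕ) : FreeLieAlgebra ℚ (ElGen n) → t1Bar n :=
  fun x => LieSubmodule.Quotient.mk (N := centralIdeal n) (t1Mk n x)

/-- The relators defining the Lie algebra `L̃_n`. -/
def tildeRel (n : ℕ) : Set (FreeLieAlgebra ℚ (ElGen n)) :=
  -- t̃_{ij} = t̃_{ji}
  {z | ∃ i j, ∃ h : i ≠ j, z = genT i j h - genT j i h.symm} ∪
  -- t̃_{ij} = ⁅X̃_i, Ỹ_j⁆
  {z | ∃ i j, ∃ h : i ≠ j, z = genT i j h - ⁅genX i, genY j⁆} ∪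
  -- ⁅X̃_i, X̃_j⁆ = 0, ⁅Ỹ_i, Ỹ_j⁆ = 0
  {z | ∃ i j, i ≠ j ∧ z = ⁅genX i, genX j⁆} ∪
  {z | ∃ i j, i ≠ j ∧ z = ⁅genY i, genY j⁆} ∪
  -- ⁅X̃_i, t̃_{jk}⁆ = 0, ⁅Ỹ_i, t̃_{jk}⁆ = 0 for i, j, k distinct
  {z | ∃ i j k, ∃ hjk : j ≠ k, i ≠ j ∧ i ≠ k ∧ z = ⁅genX i, genT j k hjk⁆} ∪
  {z | ∃ i j k, ∃ hjk : j ≠ k, i ≠ j ∧ i ≠ k ∧ z = ⁅genY i, genT j k hjk⁆} ∪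
  -- ⁅X̃_i + X̃_j, t̃_{ij}⁆ = 0, ⁅Ỹ_i + Ỹ_j, t̃_{ij}⁆ = 0 for i ≠ j
  {z | ∃ i j, ∃ h : i ≠ j, z = ⁅genX i + genX j, genT i j h⁆} ∪
  {z | ∃ i j, ∃ h : i ≠ j, z = ⁅genY i + genY j, genT i j h⁆}

/-- The Lie ideal generated by the relators of `L̃_n`. -/
noncomputable def tildeIdeal (n : ℕ) : LieIdeal ℚ (FreeLieAlgebra ℚ (ElGen n)) :=
  LieSubmodule.lieSpan ℚ (FreeLieAlgebra ℚ (ElGen n)) (tildeRel n)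

/-- The Lie algebra `L̃_n`. -/
abbrev Ltilde (n : ℕ) : Type _ := FreeLieAlgebra ℚ (ElGen n) ⧸ tildeIdeal n

/-- The quotient map onto `L̃_n`. -/
noncomputable def LtildeMk (n : ℕ) : FreeLieAlgebra ℚ (ElGen n) → Ltilde n :=
  LieSubmodule.Quotient.mk (N := tildeIdeal n)

/-- Half of the relations (those involving the first family more often). -/
structure HalfSys {L : Type*} [LieRing L] (n : ℕ) (X Y : Fin n → L) : Prop where
  symm : ∀ i j, i ≠ j → ⁅X i, Y j⁆ = ⁅X j, Y i⁆
  xx : ∀ i j, ⁅X i, X j⁆ = 0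
  xt : ∀ k i j, k ≠ i → k ≠ j → i ≠ j → ⁅X k, ⁅X i, Y j⁆⁆ = 0
  xxt : ∀ i j, i ≠ j → ⁅X i + X j, ⁅X i, Y j⁆⁆ = 0

theorem HalfSys.extend {L : Type*} [LieRing L] {n : ℕ} {X Y : Fin (n + 1) → L}
    (h : HalfSys n (fun i => X i.castSucc) (fun i => Y i.castSucc))
    (hX : ∑ i, X i = 0) (hY : ∑ i, Y i = 0) : HalfSys (n + 1) X Y := by
  have hXl : X (Fin.last n) = - ∑ i : Fin n, X i.castSucc := by
    rw [Fin.sum_univ_castSucc] at hX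
    exact (neg_eq_of_add_eq_zero_right hX).symm
  have hYl : Y (Fin.last n) = - ∑ i : Fin n, Y i.castSucc := by
    rw [Fin.sum_univ_castSucc] at hY
    exact (neg_eq_of_add_eq_zero_right hY).symm
  have hcl : ∀ i : Fin n, ⁅X i.castSucc, Y (Fin.last n)⁆ = ⁅X (Fin.last n), Y i.castSucc⁆ := by
    intro i
    rw [hXl, hYl, lie_neg, neg_lie, lie_sum, sum_lie]
    congr 1
    refine Finset.sum_congr rfl fun j _ => ?_
    by_cases hij : i = j
    · rw [hij]
    · exact h.symm i j hij
  have hsymm : ∀ i j, i ≠ j → ⁅X i, Y j⁆ = ⁅X j, Y i⁆ := by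
    intro i j hij
    induction i using Fin.lastCases with
    | last =>
      induction j using Fin.lastCases with
      | last => exact absurd rfl hij
      | cast j => exact (hcl j).symm
    | cast i =>
      induction j using Fin.lastCases with
      | last => exact hcl i
      | cast j => exact h.symm i j (fun e => hij (by rw [e]))
  have hxx : ∀ i j, ⁅X i, X j⁆ = 0 := by
    have h1 : ∀ i : Fin n, ⁅X i.castSucc, X (Fin.last n)⁆ = 0 := by
      intro i
      rw [hXl, lie_neg, lie_sum, Finset.sum_eq_zero (fun j _ => h.xx i j), neg_zero]
    intro i j
    induction i using Fin.lastCases with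
    | last =>
      induction j using Fin.lastCases with
      | last => exact lie_self _
      | cast j => rw [← lie_skew, h1 j, neg_zero]
    | cast i =>
      induction j using Fin.lastCases with
      | last => exact h1 i
      | cast j => exact h.xx i j
  have hl : ∀ k i : Fin n, k ≠ i → ⁅X k.castSucc, ⁅X i.castSucc, Y (Fin.last n)⁆⁆ = 0 := by
    intro k i hki
    rw [hYl, lie_neg, lie_neg, lie_sum, lie_sum, neg_eq_zero,
      Finset.sum_eq_add i k hki.symm ?_ (by simp) (by simp)]
    · have e1 := leibniz_lie (X k.castSucc) (X i.castSucc) (Y i.castSucc)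
      rw [hxx, zero_lie, zero_add] at e1
      have e2 := h.xxt i k hki.symm
      have e3 := h.symm k i hki
      try dsimp only at e2 e3
      rw [e1, e3, ← add_lie, e2]
    · rintro l - ⟨h1, h2⟩
      exact h.xt k i l hki h2.symm h1.symm
  have hxt : ∀ k i j, k ≠ i → k ≠ j → i ≠ j → ⁅X k, ⁅X i, Y j⁆⁆ = 0 := by
    intro k i j hki hkj hij
    induction k using Fin.lastCases with
    | last =>
      induction i using Fin.lastCases with
      | last => exact absurd rfl hki
      | cast i =>
        induction j using Fin.lastCases with
        | last => exact absurd rfl hkj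
        | cast j =>
          have hij' : i ≠ j := fun e => hij (by rw [e])
          rw [hXl, neg_lie, sum_lie, neg_eq_zero,
            Finset.sum_eq_add i j hij' ?_ (by simp) (by simp), ← add_lie]
          · exact h.xxt i j hij'
          · rintro l - ⟨h1, h2⟩
            exact h.xt l i j h1 h2 hij'
    | cast k =>
      induction i using Fin.lastCases with
      | last =>
        induction j using Fin.lastCases with
        | last => exact absurd rfl hij
        | cast j =>
          rw [← hcl]
          exact hl k j (fun e => hkj (by rw [e]))
      | cast i =>
        induction j using Fin.lastCases with
        | last => exact hl k i (fun e => hki (by rw [e]))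
        | cast j =>
          exact h.xt k i j (fun e => hki (by rw [e])) (fun e => hkj (by rw [e]))
            (fun e => hij (by rw [e]))
  refine ⟨hsymm, hxx, hxt, fun i j hij => ?_⟩
  have e : ⁅∑ l, X l, ⁅X i, Y j⁆⁆ = 0 := by rw [hX, zero_lie]
  rw [sum_lie, Finset.sum_eq_add i j hij ?_ (by simp) (by simp), ← add_lie] at e
  · exact e
  · rintro l - ⟨h1, h2⟩
    exact hxt l i j h1 h2 hij

/-- The universal property of a quotient Lie algebra. -/
noncomputable def quotLift {A B : Type*} [LieRing A] [LieAlgebra ℚ A] [LieRing B] [LieAlgebra ℚ B]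
    (I : LieIdeal ℚ A) (f : A →ₗ⁅ℚ⁆ B) (h : I ≤ f.ker) : (A ⧸ I) →ₗ⁅ℚ⁆ B :=
  { I.toSubmodule.liftQ (f : A →ₗ[ℚ] B) (fun x hx => by
      have := h hx
      simpa using this) with
    map_lie' := by
      intro x y
      induction x using Submodule.Quotient.induction_on
      induction y using Submodule.Quotient.induction_on
      exact LieHom.map_lie f _ _ }

theorem quotLift_mk {A B : Type*} [LieRing A] [LieAlgebra ℚ A] [LieRing B] [LieAlgebra ℚ B]
    (I : LieIdeal ℚ A) (f : A →ₗ⁅ℚ⁆ B) (h : I ≤ f.ker) (x : A) :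
    quotLift I f h (LieSubmodule.Quotient.mk x) = f x := rfl

/-- The quotient map as a morphism of Lie algebras. -/
noncomputable def quotMk {A : Type*} [LieRing A] [LieAlgebra ℚ A] (I : LieIdeal ℚ A) :
    A →ₗ⁅ℚ⁆ (A ⧸ I) :=
  { I.toSubmodule.mkQ with map_lie' := rfl }

theorem quotMk_surj {A : Type*} [LieRing A] [LieAlgebra ℚ A] (I : LieIdeal ℚ A) :
    Function.Surjective (quotMk I) := Submodule.mkQ_surjective _

theorem quotMk_zero {A : Type*} [LieRing A] [LieAlgebra ℚ A] {I : LieIdeal ℚ A} {x : A}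
    (h : x ∈ I) : quotMk I x = 0 := LieSubmodule.Quotient.mk_eq_zero'.2 h

/-- The map out of the free Lie algebra. -/
noncomputable def freeMap {L : Type*} [LieRing L] [LieAlgebra ℚ L] {n : ℕ} (X Y : Fin n → L) :
    FreeLieAlgebra ℚ (ElGen n) →ₗ⁅ℚ⁆ L :=
  FreeLieAlgebra.lift ℚ (Sum.elim X (Sum.elim Y (fun p => ⁅X p.1.1, Y p.1.2⁆)))

section
variable {L : Type*} [LieRing L] [LieAlgebra ℚ L] {n : ℕ} (X Y : Fin n → L)

theorem freeMap_X (i : Fin n) : freeMap X Y (genX i) = X i := by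
  simp [freeMap, genX]

theorem freeMap_Y (i : Fin n) : freeMap X Y (genY i) = Y i := by
  simp [freeMap, genY]

theorem freeMap_T (i j : Fin n) (h : i ≠ j) : freeMap X Y (genT i j h) = ⁅X i, Y j⁆ := by
  simp [freeMap, genT]

variable {X Y}

theorem tilde_le (h : HalfSys n X Y) (h' : HalfSys n Y X) :
    tildeIdeal n ≤ (freeMap X Y).ker := by
  rw [tildeIdeal, LieSubmodule.lieSpan_le]
  intro z hz
  rw [SetLike.mem_coe, LieHom.mem_ker]
  rcases hz with ((((((( ⟨i, j, e, rfl⟩ | ⟨i, j, e, rfl⟩) | ⟨i, j, e, rfl⟩) | ⟨i, j, e, rfl⟩) |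
    ⟨i, j, k, e, e1, e2, rfl⟩) | ⟨i, j, k, e, e1, e2, rfl⟩) | ⟨i, j, e, rfl⟩) | ⟨i, j, e, rfl⟩) <;>
  simp only [map_sub, map_add, LieHom.map_lie, freeMap_X, freeMap_Y, freeMap_T]
  · rw [h.symm i j e, sub_self]
  · rw [sub_self]
  · exact h.xx i j
  · exact h'.xx i j
  · exact h.xt i j k e1 e2 e
  · rw [← lie_skew (X j), lie_neg, h'.xt i k j e2 e1 e.symm, neg_zero]
  · exact h.xxt i j e
  · rw [← lie_skew (X i), lie_neg, add_comm, h'.xxt j i e.symm, neg_zero]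

theorem t1_le (h : HalfSys n X Y) (h' : HalfSys n Y X) (hY : ∑ i, Y i = 0) :
    t1Ideal n ≤ (freeMap X Y).ker := by
  have hx : ∀ k i j, k ≠ i → k ≠ j → i ≠ j → ⁅⁅X i, Y j⁆, X k⁆ = 0 := by
    intro k i j h1 h2 h3
    rw [← lie_skew, h.xt k i j h1 h2 h3, neg_zero]
  have hy : ∀ k i j, k ≠ i → k ≠ j → i ≠ j → ⁅⁅X i, Y j⁆, Y k⁆ = 0 := by
    intro k i j h1 h2 h3
    rw [← lie_skew, ← lie_skew (X i), lie_neg, h'.xt k j i h2 h1 h3.symm, neg_zero, neg_zero]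
  rw [t1Ideal, LieSubmodule.lieSpan_le]
  intro z hz
  rw [SetLike.mem_coe, LieHom.mem_ker]
  rcases hz with (((((((((( ⟨i, j, e, rfl⟩ | ⟨i, j, e, rfl⟩) | ⟨i, j, e, rfl⟩) | ⟨i, j, e, rfl⟩) |
    ⟨i, rfl⟩) | ⟨i, j, k, e, e1, e2, rfl⟩) | ⟨i, j, k, l, e, e', e1, e2, e3, e4, rfl⟩) |
    ⟨i, j, k, e, e1, e2, rfl⟩) | ⟨i, j, k, e, e1, e2, rfl⟩) | ⟨i, j, e, rfl⟩) | ⟨i, j, e, rfl⟩) <;>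
  simp only [map_sub, map_add, LieHom.map_lie, freeMap_X, freeMap_Y, freeMap_T]
  · rw [h.symm i j e, sub_self]
  · rw [sub_self]
  · exact h.xx i j
  · exact h'.xx i j
  · have e : ⁅X i, ∑ j, Y j⁆ = 0 := by rw [hY, lie_zero]
    rw [lie_sum, ← Finset.add_sum_erase _ _ (Finset.mem_univ i)] at e
    rw [map_sum, ← Finset.add_sum_erase _ _ (Finset.mem_univ i)]
    simp only [ne_eq, not_true_eq_false, dite_false, map_zero, zero_add]
    rw [← e]
    congr 1
    refine Finset.sum_congr rfl fun j hj => ?_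
    have hij : ¬ i = j := fun e => Finset.ne_of_mem_erase hj e.symm
    rw [dif_pos hij, freeMap_T]
  · rw [← add_lie, leibniz_lie, hy k i j e1.symm e2.symm e, lie_zero, add_zero,
      ← lie_skew ⁅X i, Y j⁆, h.xxt i j e, neg_zero, zero_lie]
  · rw [leibniz_lie, hx k i j e1.symm e3.symm e, hy l i j e2.symm e4.symm e]
    simp
  · exact h.xt i j k e1 e2 e
  · rw [← lie_skew (X j), lie_neg, h'.xt i k j e2 e1 e.symm, neg_zero]
  · exact h.xxt i j e
  · rw [← lie_skew (X i), lie_neg, add_comm, h'.xxt j i e.symm, neg_zero]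

/-- The map out of `t̄`. -/
noncomputable def barLift (h : HalfSys n X Y) (h' : HalfSys n Y X) (hX : ∑ i, X i = 0)
    (hY : ∑ i, Y i = 0) : t1Bar n →ₗ⁅ℚ⁆ L :=
  quotLift (centralIdeal n) (quotLift (t1Ideal n) (freeMap X Y) (t1_le h h' hY)) (by
    rw [centralIdeal, LieSubmodule.lieSpan_le]
    intro z hz
    rw [SetLike.mem_coe, LieHom.mem_ker]
    rcases hz with rfl | rfl
    · refine (quotLift_mk _ _ _ _).trans ?_
      rw [map_sum, ← hX]
      simp only [freeMap_X]
    · refine (quotLift_mk _ _ _ _).trans ?_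
      rw [map_sum, ← hY]
      simp only [freeMap_Y])

theorem barLift_mk (h : HalfSys n X Y) (h' : HalfSys n Y X) (hX : ∑ i, X i = 0)
    (hY : ∑ i, Y i = 0) (z) : barLift h h' hX hY (t1BarMk n z) = freeMap X Y z := rfl

/-- The map out of `L̃`. -/
noncomputable def tildeLift (h : HalfSys n X Y) (h' : HalfSys n Y X) : Ltilde n →ₗ⁅ℚ⁆ L :=
  quotLift (tildeIdeal n) (freeMap X Y) (tilde_le h h')

theorem tildeLift_mk (h : HalfSys n X Y) (h' : HalfSys n Y X) (z) :
    tildeLift h h' (LtildeMk n z) = freeMap X Y z := rfl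

end

/-- Recover the relations from a morphism killing them. -/
theorem sys_of_hom {L : Type*} [LieRing L] [LieAlgebra ℚ L] {n : ℕ}
    (f : FreeLieAlgebra ℚ (ElGen n) →ₗ⁅ℚ⁆ L) (hf : ∀ z ∈ tildeRel n, f z = 0) :
    HalfSys n (fun i => f (genX i)) (fun i => f (genY i)) ∧
    HalfSys n (fun i => f (genY i)) (fun i => f (genX i)) ∧
    ∀ i j (h : i ≠ j), f (genT i j h) = ⁅f (genX i), f (genY j)⁆ := by
  simp only [tildeRel, Set.mem_union, or_imp, forall_and] at hf
  obtain ⟨⟨⟨⟨⟨⟨⟨h1, h2⟩, h3⟩, h4⟩, h5⟩, h6⟩, h7⟩, h8⟩ := hf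
  have hT : ∀ i j (h : i ≠ j), f (genT i j h) = ⁅f (genX i), f (genY j)⁆ := by
    intro i j h
    have := h2 _ ⟨i, j, h, rfl⟩
    rwa [map_sub, sub_eq_zero, LieHom.map_lie] at this
  have hS : ∀ i j (h : i ≠ j), ⁅f (genX i), f (genY j)⁆ = ⁅f (genX j), f (genY i)⁆ := by
    intro i j h
    have := h1 _ ⟨i, j, h, rfl⟩
    rwa [map_sub, sub_eq_zero, hT, hT] at this
  refine ⟨⟨hS, ?_, ?_, ?_⟩, ⟨?_, ?_, ?_, ?_⟩, hT⟩
  · intro i j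
    by_cases h : i = j
    · rw [h, lie_self]
    · rw [← LieHom.map_lie]; exact h3 _ ⟨i, j, h, rfl⟩
  · intro k i j a b c
    try dsimp only
    rw [← hT _ _ c, ← LieHom.map_lie]
    exact h5 _ ⟨k, i, j, c, a, b, rfl⟩
  · intro i j c
    try dsimp only
    rw [← hT _ _ c, ← map_add, ← LieHom.map_lie]
    exact h7 _ ⟨i, j, c, rfl⟩
  · intro i j c
    try dsimp only
    rw [← lie_skew, hS _ _ c.symm, lie_skew]
  · intro i j
    by_cases h : i = j
    · rw [h, lie_self]
    · rw [← LieHom.map_lie]; exact h4 _ ⟨i, j, h, rfl⟩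
  · intro k i j a b c
    try dsimp only
    rw [← lie_skew (f (genY i)), lie_neg, neg_eq_zero, ← hT _ _ c.symm, ← LieHom.map_lie]
    exact h6 _ ⟨k, j, i, c.symm, b, a, rfl⟩
  · intro i j c
    try dsimp only
    rw [← lie_skew (f (genY i)), lie_neg, neg_eq_zero, add_comm, ← hT _ _ c.symm,
      ← map_add, ← LieHom.map_lie]
    exact h8 _ ⟨j, i, c.symm, rfl⟩

theorem tilde_sub_t1 (n : ℕ) : tildeRel n ⊆ t1Rel n := by
  intro z hz
  simp only [tildeRel, t1Rel, Set.mem_union] at hz ⊢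
  tauto

/-- The quotient map to `t̄` as a morphism. -/
noncomputable def barHom (n : ℕ) : FreeLieAlgebra ℚ (ElGen n) →ₗ⁅ℚ⁆ t1Bar n :=
  (quotMk (centralIdeal n)).comp (quotMk (t1Ideal n))

theorem barHom_surj (n : ℕ) : Function.Surjective (barHom n) :=
  (quotMk_surj _).comp (quotMk_surj _)

theorem barHom_rel {n : ℕ} : ∀ z ∈ tildeRel n, barHom n z = 0 := by
  intro z hz
  have h : quotMk (t1Ideal n) z = 0 :=
    quotMk_zero (LieSubmodule.subset_lieSpan (tilde_sub_t1 n hz))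
  change quotMk _ (quotMk _ z) = 0
  rw [h, map_zero]

theorem barHom_X (n : ℕ) : ∑ i, barHom n (genX i) = 0 := by
  rw [← map_sum]
  exact quotMk_zero (LieSubmodule.subset_lieSpan (Set.mem_insert _ _))

theorem barHom_Y (n : ℕ) : ∑ i, barHom n (genY i) = 0 := by
  rw [← map_sum]
  exact quotMk_zero (LieSubmodule.subset_lieSpan (Set.mem_insert_of_mem _ rfl))

theorem tildeHom_rel {n : ℕ} : ∀ z ∈ tildeRel n, quotMk (tildeIdeal n) z = 0 :=
  fun _ hz => quotMk_zero (LieSubmodule.subset_lieSpan hz)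

theorem free_ext {L : Type*} [LieRing L] [LieAlgebra ℚ L] {n : ℕ}
    {f g : FreeLieAlgebra ℚ (ElGen n) →ₗ⁅ℚ⁆ L}
    (hX : ∀ i, f (genX i) = g (genX i)) (hY : ∀ i, f (genY i) = g (genY i))
    (hT : ∀ i j h, f (genT i j h) = g (genT i j h)) : f = g := by
  apply FreeLieAlgebra.hom_ext
  rintro (i | i | ⟨⟨i, j⟩, h⟩)
  · exact hX i
  · exact hY i
  · exact hT i j h

theorem sum_snoc_neg {L : Type*} [LieRing L] {n : ℕ} (X : Fin n → L) :
    ∑ i, (Fin.snoc X (-∑ i, X i) : Fin (n + 1) → L) i = 0 := by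
  rw [Fin.sum_univ_castSucc]
  simp

theorem eq_snoc {L : Type*} [LieRing L] {n : ℕ} {X : Fin (n + 1) → L} (h : ∑ i, X i = 0) :
    X (Fin.last n) = -∑ i : Fin n, X i.castSucc := by
  rw [Fin.sum_univ_castSucc] at h
  exact (neg_eq_of_add_eq_zero_right h).symm

/-- the assignment `X̃_i ↦ X_i`, `Ỹ_i ↦ Y_i`, `t̃_{ij} ↦ t_{ij}` (indices
viewed among the `n+1` indices of `t̄_{1,n+1}`) determines a well-defined Lie algebra
homomorphism `L̃_n → t̄_{1,n+1}`, and this homomorphism is an isomorphism. -/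
theorem stmt_17 (n : ℕ) (hn : 1 ≤ n) :
    ∃ φ : Ltilde n →ₗ⁅ℚ⁆ t1Bar (n + 1),
      (∀ i : Fin n, φ (LtildeMk n (genX i)) = t1BarMk (n + 1) (genX i.castSucc)) ∧
      (∀ i : Fin n, φ (LtildeMk n (genY i)) = t1BarMk (n + 1) (genY i.castSucc)) ∧
      (∀ (i j : Fin n) (h : i ≠ j),
        φ (LtildeMk n (genT i j h)) =
          t1BarMk (n + 1) (genT i.castSucc j.castSucc ((Fin.castSucc_injective n).ne h))) ∧
      Function.Bijective φ := by
  obtain ⟨b1, b2, bT⟩ := sys_of_hom (barHom (n + 1)) barHom_rel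
  obtain ⟨a1, a2, aT⟩ := sys_of_hom (quotMk (tildeIdeal n)) tildeHom_rel
  have inj : ∀ {i j : Fin n}, i ≠ j → i.castSucc ≠ j.castSucc :=
    fun h => (Fin.castSucc_injective n).ne h
  have c1 : HalfSys n (fun i : Fin n => barHom (n + 1) (genX i.castSucc))
      (fun i : Fin n => barHom (n + 1) (genY i.castSucc)) :=
    ⟨fun i j h => b1.symm _ _ (inj h), fun i j => b1.xx _ _,
      fun i j k h h' h'' => b1.xt _ _ _ (inj h) (inj h') (inj h''),
      fun i j h => b1.xxt _ _ (inj h)⟩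
  have c2 : HalfSys n (fun i : Fin n => barHom (n + 1) (genY i.castSucc))
      (fun i : Fin n => barHom (n + 1) (genX i.castSucc)) :=
    ⟨fun i j h => b2.symm _ _ (inj h), fun i j => b2.xx _ _,
      fun i j k h h' h'' => b2.xt _ _ _ (inj h) (inj h') (inj h''),
      fun i j h => b2.xxt _ _ (inj h)⟩
  let φ : Ltilde n →ₗ⁅ℚ⁆ t1Bar (n + 1) := tildeLift c1 c2
  have φX : ∀ i : Fin n, φ (quotMk _ (genX i)) = barHom (n + 1) (genX i.castSucc) :=
    fun i => (tildeLift_mk c1 c2 _).trans (freeMap_X _ _ i)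
  have φY : ∀ i : Fin n, φ (quotMk _ (genY i)) = barHom (n + 1) (genY i.castSucc) :=
    fun i => (tildeLift_mk c1 c2 _).trans (freeMap_Y _ _ i)
  have φT : ∀ (i j : Fin n) (h : i ≠ j), φ (quotMk _ (genT i j h)) =
      barHom (n + 1) (genT i.castSucc j.castSucc (inj h)) :=
    fun i j h => ((tildeLift_mk c1 c2 _).trans (freeMap_T _ _ i j h)).trans (bT _ _ _).symm
  -- the inverse
  let A : Fin n → Ltilde n := fun i => quotMk (tildeIdeal n) (genX i)
  let B : Fin n → Ltilde n := fun i => quotMk (tildeIdeal n) (genY i)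
  let A' : Fin (n + 1) → Ltilde n := Fin.snoc A (-∑ i, A i)
  let B' : Fin (n + 1) → Ltilde n := Fin.snoc B (-∑ i, B i)
  have hA : ∑ i, A' i = 0 := sum_snoc_neg A
  have hB : ∑ i, B' i = 0 := sum_snoc_neg B
  have hAc : (fun i : Fin n => A' i.castSucc) = A := by
    funext i; exact Fin.snoc_castSucc (α := fun _ => Ltilde n) _ _ _
  have hBc : (fun i : Fin n => B' i.castSucc) = B := by
    funext i; exact Fin.snoc_castSucc (α := fun _ => Ltilde n) _ _ _
  have d1 : HalfSys (n + 1) A' B' := HalfSys.extend (by rw [hAc, hBc]; exact a1) hA hB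
  have d2 : HalfSys (n + 1) B' A' := HalfSys.extend (by rw [hAc, hBc]; exact a2) hB hA
  let ψ : t1Bar (n + 1) →ₗ⁅ℚ⁆ Ltilde n := barLift d1 d2 hA hB
  have ψX : ∀ i, ψ (barHom (n + 1) (genX i)) = A' i :=
    fun i => (barLift_mk d1 d2 hA hB _).trans (freeMap_X _ _ i)
  have ψY : ∀ i, ψ (barHom (n + 1) (genY i)) = B' i :=
    fun i => (barLift_mk d1 d2 hA hB _).trans (freeMap_Y _ _ i)
  have φA : ∀ i, φ (A' i) = barHom (n + 1) (genX i) := by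
    intro i
    induction i using Fin.lastCases with
    | last =>
      rw [eq_snoc hA, eq_snoc (barHom_X (n + 1)), map_neg, map_sum]
      congr 1
      refine Finset.sum_congr rfl fun i _ => ?_
      rw [congrFun hAc i]
      exact φX i
    | cast i =>
      rw [congrFun hAc i]
      exact φX i
  have φB : ∀ i, φ (B' i) = barHom (n + 1) (genY i) := by
    intro i
    induction i using Fin.lastCases with
    | last =>
      rw [eq_snoc hB, eq_snoc (barHom_Y (n + 1)), map_neg, map_sum]
      congr 1
      refine Finset.sum_congr rfl fun i _ => ?_
      rw [congrFun hBc i]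
      exact φY i
    | cast i =>
      rw [congrFun hBc i]
      exact φY i
  have e1 : (ψ.comp φ).comp (quotMk (tildeIdeal n)) = quotMk (tildeIdeal n) := by
    have hx : ∀ i, ψ (φ (quotMk (tildeIdeal n) (genX i))) = quotMk (tildeIdeal n) (genX i) := by
      intro i
      rw [φX, ψX, congrFun hAc i]
    have hy : ∀ i, ψ (φ (quotMk (tildeIdeal n) (genY i))) = quotMk (tildeIdeal n) (genY i) := by
      intro i
      rw [φY, ψY, congrFun hBc i]
    refine free_ext hx hy fun i j h => ?_
    change ψ (φ (quotMk (tildeIdeal n) (genT i j h))) = _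
    rw [aT, LieHom.map_lie, LieHom.map_lie, hx, hy]
  have e2 : (φ.comp ψ).comp (barHom (n + 1)) = barHom (n + 1) := by
    have hx : ∀ i, φ (ψ (barHom (n + 1) (genX i))) = barHom (n + 1) (genX i) := by
      intro i
      rw [ψX, φA]
    have hy : ∀ i, φ (ψ (barHom (n + 1) (genY i))) = barHom (n + 1) (genY i) := by
      intro i
      rw [ψY, φB]
    refine free_ext hx hy fun i j h => ?_
    change φ (ψ (barHom (n + 1) (genT i j h))) = _
    rw [bT, LieHom.map_lie, LieHom.map_lie, hx, hy]
  refine ⟨φ, φX, φY, φT, ?_, ?_⟩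
  · refine Function.LeftInverse.injective (g := ψ) fun x => ?_
    obtain ⟨z, rfl⟩ := quotMk_surj _ x
    exact LieHom.congr_fun e1 z
  · refine Function.RightInverse.surjective (g := ψ) fun x => ?_
    obtain ⟨z, rfl⟩ := barHom_surj _ x
    exact LieHom.congr_fun e2 z
end

section
/- Let L be a Lie algebra over a commutative ring and let X, X', Y, Y' ∈ L satisfy ⁅Y, Y'⁆ = 0, ⁅X, Y'⁆ = ⁅X', Y⁆, and ⁅⁅X', Y⁆, Y + Y'⁆ = 0. Then for every integer k ≥ 1, (ad Y)^k (X') = (−1)^{k+1} · (ad Y')^k (X), where ad Z denotes the adjoint map W ↦ ⁅Z, W⁆ and (ad Z)^k its k-fold iterate. -/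
/-!
STATEMENT 19: In any Lie algebra, if `⁅Y, Y'⁆ = 0`, `⁅X, Y'⁆ = ⁅X', Y⁆` and
`⁅⁅X', Y⁆, Y + Y'⁆ = 0`, then `(ad Y)^k X' = (-1)^(k+1) • (ad Y')^k X` for every `k ≥ 1`.
-/

theorem stmt_19 {R L : Type*} [CommRing R] [LieRing L] [LieAlgebra R L]
    (X X' Y Y' : L)
    (h1 : ⁅Y, Y'⁆ = 0) (h2 : ⁅X, Y'⁆ = ⁅X', Y⁆) (h3 : ⁅⁅X', Y⁆, Y + Y'⁆ = 0)
    (k : ℕ) (hk : 1 ≤ k) :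
    ((LieAlgebra.ad R L Y) ^ k) X' = ((-1 : ℤ) ^ (k + 1)) • ((LieAlgebra.ad R L Y') ^ k) X := by
  obtain ⟨n, rfl⟩ : ∃ n, k = n + 1 := ⟨k - 1, by omega⟩
  have hc : Commute (LieAlgebra.ad R L Y) (LieAlgebra.ad R L Y') := by
    refine LinearMap.ext fun W => ?_
    simp only [Module.End.mul_apply, LieAlgebra.ad_apply]
    rw [leibniz_lie Y Y' W, h1, zero_lie, zero_add]
  have hz : LieAlgebra.ad R L Y' X = LieAlgebra.ad R L Y X' := by
    rw [LieAlgebra.ad_apply, LieAlgebra.ad_apply, ← lie_skew, h2, lie_skew]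
  have hs : LieAlgebra.ad R L Y (LieAlgebra.ad R L Y X')
      = -LieAlgebra.ad R L Y' (LieAlgebra.ad R L Y X') := by
    rw [← lie_skew, neg_eq_zero, add_lie, ← lie_skew X' Y, lie_neg, lie_neg] at h3
    simp only [LieAlgebra.ad_apply]
    have h4 : ⁅Y, ⁅Y, X'⁆⁆ + ⁅Y', ⁅Y, X'⁆⁆ = 0 := by
      rw [← neg_eq_zero, neg_add]; exact h3
    exact eq_neg_of_add_eq_zero_left h4
  rw [pow_succ, pow_succ (LieAlgebra.ad R L Y'), Module.End.mul_apply, Module.End.mul_apply, hz]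
  clear hk
  induction n with
  | zero => simp
  | succ n ih =>
    have hcn := congrArg (fun f => f (LieAlgebra.ad R L Y X')) (hc.pow_right n).eq
    simp only [Module.End.mul_apply] at hcn
    rw [pow_succ', Module.End.mul_apply, ih, map_zsmul, hcn, hs, map_neg,
      pow_succ (LieAlgebra.ad R L Y'), Module.End.mul_apply, pow_succ (-1 : ℤ) (n + 1 + 1)]
    simp
end
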